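/- Let s > 2 be real and let γ̃ : ℝ → ℝ be continuously differentiable with γ̃'(θ) > 0 and γ̃(θ+2π) = γ̃(θ) + 2π for all θ. For t ∈ [0,1] set γ̃_t = t·γ̃ + (1−t)·id, let η_t be the inverse function of γ̃_t, and suppose C ≥ 0 is such that ∑_{k∈ℤ} (1+k²)^{s−1} |(η_t')^̂_k|² ≤ C² for every t ∈ [0,1]. Define λ_{m,n} := (1/2π)∫₀^{2π} e^{−imθ} e^{inγ̃(θ)} dθ. Then the family ( (m/n) · |λ_{−m,n}|² )_{(m,n), m≥1, n≥1} is summable. -/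

import Mathlib

open scoped ENNReal Real

/-- The inverse of a `C¹` function with positive derivative is differentiable. -/
lemma hasDerivAt_inverse_of_deriv_pos {f g : ℝ → ℝ} (hf : ContDiff ℝ 1 f)
    (hpos : ∀ θ, 0 < deriv f θ) (hl : Function.LeftInverse g f)
    (hr : Function.RightInverse g f) (φ : ℝ) :
    HasDerivAt g (deriv f (g φ))⁻¹ φ ∧ Continuous g := by
  have hmono : StrictMono f := strictMono_of_deriv_pos hpos
  have hg : Monotone g := fun a b hab => by
    rw [← hmono.le_iff_le, hr a, hr b]
    exact hab
  have hgc : Continuous g := hg.continuous_of_surjective hl.surjective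
  refine ⟨?_, hgc⟩
  exact HasDerivAt.of_local_left_inverse hgc.continuousAt
    (hf.differentiable one_ne_zero (g φ)).hasDerivAt (hpos _).ne' (Filter.Eventually.of_forall hr)

/-- Change of variables for the Fourier modes of a lift `f` of a circle diffeomorphism. -/
lemma integral_exp_comp_eq_integral_exp_mul_deriv_inverse {f g : ℝ → ℝ} (hf : ContDiff ℝ 1 f)
    (hpos : ∀ θ, 0 < deriv f θ) (hper : ∀ θ, f (θ + 2 * π) = f θ + 2 * π)
    (hl : Function.LeftInverse g f) (hr : Function.RightInverse g f) (k : ℤ) :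
    ∫ θ in (0 : ℝ)..(2 * π), Complex.exp (-Complex.I * k * f θ) =
      ∫ φ in (0 : ℝ)..(2 * π),
        Complex.exp (-Complex.I * k * φ) * Complex.ofReal (deriv g φ) := by
  have hg φ : HasDerivAt g (deriv f (g φ))⁻¹ φ :=
    (hasDerivAt_inverse_of_deriv_pos hf hpos hl hr φ).1
  have hgc : Continuous g := (hasDerivAt_inverse_of_deriv_pos hf hpos hl hr 0).2
  have hf' : Continuous (deriv f) := hf.continuous_deriv le_rfl
  have hderiv : deriv g = fun φ => (deriv f (g φ))⁻¹ := funext fun φ => (hg φ).deriv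
  have hg' : Continuous (deriv g) := by
    rw [hderiv]
    exact (hf'.comp hgc).inv₀ fun φ => (hpos _).ne'
  have hgper φ : g (φ + 2 * π) = g φ + 2 * π := by
    rw [← hl (g φ + 2 * π), hper, hr]
  have hg'per : Function.Periodic (deriv g) (2 * π) := fun φ => by
    rw [← deriv_comp_add_const]
    simp [hgper]
  have hexp : Function.Periodic (fun φ : ℝ => Complex.exp (-Complex.I * k * φ)) (2 * π) :=
    fun φ => by
      refine Complex.exp_eq_exp_iff_exists_int.2 ⟨-k, ?_⟩
      push_cast
      ring
  have hperiodic : Function.Periodic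
      (fun φ : ℝ => Complex.exp (-Complex.I * k * φ) * Complex.ofReal (deriv g φ)) (2 * π) :=
    fun φ => by
      have h := hexp φ
      simp only at h ⊢
      rw [h, hg'per φ]
  have hsub := intervalIntegral.integral_deriv_smul_comp (a := 0) (b := 2 * π) (f := f)
    (f' := deriv f)
    (g := fun φ : ℝ => Complex.exp (-Complex.I * k * φ) * Complex.ofReal (deriv g φ))
    (fun θ _ => (hf.differentiable one_ne_zero θ).hasDerivAt) hf'.continuousOn (by fun_prop)
  have hend : f (2 * π) = f 0 + 2 * π := by simpa using hper 0
  rw [hend, hperiodic.intervalIntegral_add_eq (f 0) 0, zero_add] at hsub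
  rw [← hsub]
  refine intervalIntegral.integral_congr fun θ _ => ?_
  have hne : ((deriv f θ : ℝ) : ℂ) ≠ 0 := by exact_mod_cast (hpos θ).ne'
  simp only [Function.comp, hderiv, hl θ, Complex.real_smul, Complex.ofReal_inv]
  field_simp

/-- The weight `(m / n) (1 + (m + n)²) ^ (-(s - 1))` is dominated by a product. -/
lemma div_mul_rpow_neg_le {s m n : ℝ} (hs : 2 < s) (hm : 0 < m) (hn : 0 < n) :
    m / n * ((1 + (m + n) ^ 2) ^ (s - 1))⁻¹ ≤ (m ^ (s - 1))⁻¹ * (n ^ (s - 1))⁻¹ := by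
  have hms : m ^ s = m * m ^ (s - 1) := by
    rw [Real.rpow_sub_one hm.ne', mul_div_cancel₀ _ hm.ne']
  have hns : n ^ (s - 1) = n * n ^ (s - 2) := by
    rw [show s - 1 = 1 + (s - 2) by ring, Real.rpow_add hn, Real.rpow_one]
  have hbig : m ^ s * n ^ (s - 2) ≤ (1 + (m + n) ^ 2) ^ (s - 1) := by
    calc m ^ s * n ^ (s - 2) ≤ (m + n) ^ s * (m + n) ^ (s - 2) := by
          gcongr <;> linarith
      _ = ((m + n) ^ 2) ^ (s - 1) := by
          rw [← Real.rpow_add (by positivity), ← Real.rpow_natCast, ← Real.rpow_mul (by positivity)]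
          congr 1
          push_cast
          ring
      _ ≤ (1 + (m + n) ^ 2) ^ (s - 1) := by
          gcongr <;> linarith
  calc m / n * ((1 + (m + n) ^ 2) ^ (s - 1))⁻¹ ≤ m / n * (m ^ s * n ^ (s - 2))⁻¹ := by
        gcongr
    _ = (m ^ (s - 1))⁻¹ * (n ^ (s - 1))⁻¹ := by
        rw [hms, hns]
        field_simp

/-- Proposition 5.2 (Shale criterion, analytic content): for `s > 2` and a Sobolev-type
lift `γ` whose interpolation inverses `η t` have uniformly `H^{s-1}`-bounded derivatives,
the family `(m/n)|λ_{-m,n}|²` over `m,n ≥ 1` is summable, where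
`λ_{m,n} = (1/2π)∫₀^{2π} e^{-imθ} e^{inγ(θ)} dθ`. -/
theorem stmt_7 (s : ℝ) (hs : 2 < s) (γ : ℝ → ℝ)
    (hC1 : ContDiff ℝ 1 γ) (hpos : ∀ θ : ℝ, 0 < deriv γ θ)
    (hper : ∀ θ : ℝ, γ (θ + 2 * π) = γ θ + 2 * π)
    (η : ℝ → ℝ → ℝ)
    (hη : ∀ t ∈ Set.Icc (0 : ℝ) 1,
      Function.LeftInverse (η t) (fun θ => t * γ θ + (1 - t) * θ) ∧
      Function.RightInverse (η t) (fun θ => t * γ θ + (1 - t) * θ))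
    (C : ℝ) (hC : 0 ≤ C)
    (hbound : ∀ t ∈ Set.Icc (0 : ℝ) 1,
      (∑' k : ℤ, ENNReal.ofReal ((1 + (k : ℝ) ^ 2) ^ (s - 1) *
        ‖((1 / (2 * π) : ℝ) *
          ∫ φ in (0 : ℝ)..(2 * π), Complex.exp (-Complex.I * k * φ) *
            Complex.ofReal (deriv (η t) φ) : ℂ)‖ ^ 2))
        ≤ ENNReal.ofReal (C ^ 2)) :
    Summable (fun p : ℕ+ × ℕ+ =>
      ((p.1 : ℝ) / (p.2 : ℝ)) *
        ‖((1 / (2 * π) : ℝ) *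
          ∫ θ in (0 : ℝ)..(2 * π),
            Complex.exp (-Complex.I * ((-(p.1 : ℤ) : ℤ) : ℂ) * θ) *
              Complex.exp (Complex.I * ((p.2 : ℤ) : ℂ) * γ θ) : ℂ)‖ ^ 2) := by
  have hsum : Summable fun n : ℕ+ => ((n : ℝ) ^ (s - 1))⁻¹ :=
    (Real.summable_nat_rpow_inv.2 (by linarith : 1 < s - 1)).comp_injective PNat.coe_injective
  refine Summable.of_nonneg_of_le (fun p => by positivity) (fun p => ?_)
    ((hsum.mul_of_nonneg hsum (fun n => by positivity) fun n => by positivity).mul_left (C ^ 2))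
  obtain ⟨m, n⟩ := p
  have hm : (0 : ℝ) < m := by exact_mod_cast m.pos
  have hn : (0 : ℝ) < n := by exact_mod_cast n.pos
  set t : ℝ := n / (m + n) with ht_def
  have ht : t ∈ Set.Icc (0 : ℝ) 1 :=
    ⟨by positivity, (div_le_one (by positivity)).2 (by linarith)⟩
  have ht1 : t < 1 := (div_lt_one (by positivity)).2 (by linarith)
  have hderiv θ : HasDerivAt (fun θ => t * γ θ + (1 - t) * θ) (t * deriv γ θ + (1 - t)) θ := by
    simpa using ((hC1.differentiable one_ne_zero θ).hasDerivAt.const_mul t).fun_add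
      ((hasDerivAt_id θ).const_mul (1 - t))
  have hchange := integral_exp_comp_eq_integral_exp_mul_deriv_inverse
    (f := fun θ => t * γ θ + (1 - t) * θ) (g := η t) (by fun_prop)
    (fun θ => by
      rw [(hderiv θ).deriv]
      have := mul_nonneg ht.1 (hpos θ).le
      linarith)
    (fun θ => by simp only [hper]; ring) (hη t ht).1 (hη t ht).2 (-((m : ℤ) + n))
  have hphase (θ : ℝ) : Complex.exp (-Complex.I * ((-(m : ℤ) : ℤ) : ℂ) * θ) *
      Complex.exp (Complex.I * ((n : ℤ) : ℂ) * γ θ) =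
      Complex.exp (-Complex.I * ((-((m : ℤ) + n) : ℤ) : ℂ) *
        ((t * γ θ + (1 - t) * θ : ℝ) : ℂ)) := by
    have hmn : ((m : ℂ) + n) ≠ 0 := by exact_mod_cast (add_pos hm hn).ne'
    rw [← Complex.exp_add, ht_def]
    congr 1
    push_cast
    field_simp
    ring
  simp only [hphase, hchange]
  have hterm := (ENNReal.le_tsum (-((m : ℤ) + n))).trans (hbound t ht)
  rw [ENNReal.ofReal_le_ofReal_iff (by positivity)] at hterm
  have hk : (1 + (((-((m : ℤ) + n) : ℤ)) : ℝ) ^ 2) = 1 + ((m : ℝ) + n) ^ 2 := by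
    push_cast
    ring
  rw [hk, mul_comm, ← le_div_iff₀ (by positivity)] at hterm
  calc _ ≤ (m : ℝ) / n * (C ^ 2 / (1 + ((m : ℝ) + n) ^ 2) ^ (s - 1)) := by
        gcongr
    _ = C ^ 2 * ((m : ℝ) / n * ((1 + ((m : ℝ) + n) ^ 2) ^ (s - 1))⁻¹) := by ring
    _ ≤ _ := by
        exact mul_le_mul_of_nonneg_left (div_mul_rpow_neg_le hs hm hn) (sq_nonneg C)
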